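/- Let n ≥ 1 and γ ∈ (0,2). There exists a constant C > 0, depending only on n and γ, such that for every Schwartz function f : ℝⁿ → ℝ and every x ∈ ℝⁿ, C · (sup_{z ∈ ℝⁿ} |f(z)|)^γ · ∫_{ℝⁿ} |∇f(x) − ∇f(x+y)|² / |y|^{n+γ} dy ≥ |∇f(x)|^{2+γ}. -/

import Mathlib

open MeasureTheory

/-!
Test the derivative against a fixed compactly supported `φ`: since
`(∫ φ) f'(x) v = ∫ φ(y) (f'(x) - f'(x + y)) v dy + ∫ φ(y) f'(x + y) v dy`, integrating the last term
by parts costs only `‖f‖_∞ ∫ ‖φ'‖`, while the Cauchy–Schwarz inequality with weight `|y|^{n+γ}`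
bounds the first by `√(∫ φ² |y|^{n+γ}) √D_γ`. Applying this to the dilates `z ↦ f (R z)`, for which
`f'` scales like `R` and `D_γ` like `R^{2+γ}`, gives `a R ≤ b + √(K R^{2+γ})` for every `R > 0`,
with `a ∼ ‖f'(x)‖`, `b ∼ ‖f‖_∞` and `K ∼ D_γ`; take `R = 2b / a`.
-/

open Module Set Filter Topology
open scoped NNReal

theorem integral_mul_le_sqrt_integral_sq_mul_mul_sqrt_integral_sq_div
    {α : Type*} [MeasurableSpace α] {μ : Measure α} {u d w : α → ℝ}
    (hu : ∀ a, 0 ≤ u a) (hd : ∀ a, 0 ≤ d a) (hw : ∀ a, 0 ≤ w a) (hdw : ∀ a, w a = 0 → d a = 0)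
    (hum : AEStronglyMeasurable u μ) (hdm : AEStronglyMeasurable d μ)
    (hwm : AEStronglyMeasurable w μ)
    (huw : Integrable (fun a ↦ u a ^ 2 * w a) μ) (hdiv : Integrable (fun a ↦ d a ^ 2 / w a) μ) :
    ∫ a, u a * d a ∂μ ≤ √(∫ a, u a ^ 2 * w a ∂μ) * √(∫ a, d a ^ 2 / w a ∂μ) := by
  have hsqrt : AEStronglyMeasurable (fun a ↦ √(w a)) μ :=
    Real.continuous_sqrt.comp_aestronglyMeasurable hwm
  have hU (a : α) : (u a * √(w a)) ^ 2 = u a ^ 2 * w a := by rw [mul_pow, Real.sq_sqrt (hw a)]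
  have hV (a : α) : (d a / √(w a)) ^ 2 = d a ^ 2 / w a := by rw [div_pow, Real.sq_sqrt (hw a)]
  have hUV (a : α) : u a * √(w a) * (d a / √(w a)) = u a * d a := by
    rcases (hw a).eq_or_lt' with h | h
    · simp [hdw a h]
    · field_simp
  have hUmem : MemLp (fun a ↦ u a * √(w a)) (ENNReal.ofReal 2) μ := by
    rw [ENNReal.ofReal_ofNat]
    exact (memLp_two_iff_integrable_sq (hum.mul hsqrt)).2
      (huw.congr (.of_forall fun a ↦ (hU a).symm))
  have hVmem : MemLp (fun a ↦ d a / √(w a)) (ENNReal.ofReal 2) μ := by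
    rw [ENNReal.ofReal_ofNat]
    exact (memLp_two_iff_integrable_sq (hdm.div₀ hsqrt)).2
      (hdiv.congr (.of_forall fun a ↦ (hV a).symm))
  have key := integral_mul_le_Lp_mul_Lq_of_nonneg Real.HolderConjugate.two_two
    (.of_forall fun a ↦ mul_nonneg (hu a) (Real.sqrt_nonneg _))
    (.of_forall fun a ↦ div_nonneg (hd a) (Real.sqrt_nonneg _)) hUmem hVmem
  simpa only [hUV, Real.rpow_two, hU, hV, ← Real.sqrt_eq_rpow] using key

theorem rpow_le_of_forall_mul_le_add_sqrt {a b K γ : ℝ} (ha : 0 ≤ a) (hb : 0 ≤ b) (hK : 0 ≤ K)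
    (hγ : 0 ≤ γ) (h : ∀ R > 0, a * R ≤ b + √(K * R ^ (2 + γ))) :
    a ^ (2 + γ) ≤ 2 ^ (2 + γ) * b ^ γ * K := by
  rcases ha.eq_or_lt with rfl | ha
  · rw [Real.zero_rpow (by positivity)]
    positivity
  have of_pos {c : ℝ} (hc : 0 < c) (hbc : b ≤ c) : a ^ (2 + γ) ≤ 2 ^ (2 + γ) * c ^ γ * K := by
    have hle : c ≤ √(K * (2 * c / a) ^ (2 + γ)) := by
      have := h (2 * c / a) (by positivity)
      rw [mul_div_cancel₀ _ ha.ne'] at this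
      linarith
    rw [Real.le_sqrt hc.le (by positivity), Real.div_rpow (by positivity) ha.le,
      Real.mul_rpow zero_le_two hc.le, Real.rpow_add hc, Real.rpow_two, mul_div_assoc',
      le_div_iff₀ (by positivity)] at hle
    refine le_of_mul_le_mul_left (hle.trans_eq ?_) (pow_pos hc 2)
    ring
  have hcont : Tendsto (fun c : ℝ ↦ 2 ^ (2 + γ) * c ^ γ * K) (𝓝[>] b)
      (𝓝 (2 ^ (2 + γ) * b ^ γ * K)) :=
    (((Real.continuous_rpow_const hγ).const_mul _).mul_const _).continuousWithinAt
  refine ge_of_tendsto hcont ?_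
  filter_upwards [self_mem_nhdsWithin] with c hc
  exact of_pos (hb.trans_lt hc) (le_of_lt hc)

variable {E F : Type*} [NormedAddCommGroup E] [NormedSpace ℝ E]
  [NormedAddCommGroup F]

/-- The integrand of the Constantin–Vicol dissipation `D_γ(g)(x)`, as a function of the increment
`y`; here `finrank ℝ E` is the dimension `n`. At `y = 0` it is `0 / 0 = 0`. -/
noncomputable def dissipationDensity (γ : ℝ) (g : E → F) (x y : E) : ℝ :=
  ‖g x - g (x + y)‖ ^ 2 / ‖y‖ ^ (finrank ℝ E + γ)

theorem dissipationDensity_nonneg (γ : ℝ) (g : E → F) (x y : E) :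
    0 ≤ dissipationDensity γ g x y := by
  unfold dissipationDensity
  positivity

section Scaling

variable [NormedSpace ℝ F]

theorem dissipationDensity_fderiv_comp_smul {R : ℝ} (hR : 0 < R) (γ : ℝ) (f : E → F) (x y : E) :
    dissipationDensity γ (fderiv ℝ fun z ↦ f (R • z)) x y =
      R ^ (finrank ℝ E + (2 + γ)) * dissipationDensity γ (fderiv ℝ f) (R • x) (R • y) := by
  have hexp : R ^ (finrank ℝ E + (2 + γ)) = R ^ 2 * R ^ (finrank ℝ E + γ) := by
    rw [add_left_comm, Real.rpow_add hR, Real.rpow_two]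
  simp only [dissipationDensity, fderiv_comp_smul, ← smul_sub, smul_add, norm_smul,
    Real.norm_of_nonneg hR.le, Real.mul_rpow hR.le (norm_nonneg y), mul_pow, hexp]
  field_simp

variable [FiniteDimensional ℝ E] [MeasurableSpace E] [BorelSpace E] {μ : Measure E}
  [μ.IsAddHaarMeasure]

theorem integrable_dissipationDensity_fderiv_comp_smul {R γ : ℝ} (hR : 0 < R) {f : E → F} {x : E}
    (h : Integrable (dissipationDensity γ (fderiv ℝ f) (R • x)) μ) :
    Integrable (dissipationDensity γ (fderiv ℝ fun z ↦ f (R • z)) x) μ := by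
  simpa only [funext (dissipationDensity_fderiv_comp_smul hR γ f x)] using
    (h.comp_smul hR.ne').const_mul (R ^ (finrank ℝ E + (2 + γ)))

theorem integral_dissipationDensity_fderiv_comp_smul {R : ℝ} (hR : 0 < R) (γ : ℝ) (f : E → F)
    (x : E) :
    ∫ y, dissipationDensity γ (fderiv ℝ fun z ↦ f (R • z)) x y ∂μ =
      R ^ (2 + γ) * ∫ y, dissipationDensity γ (fderiv ℝ f) (R • x) y ∂μ := by
  simp only [dissipationDensity_fderiv_comp_smul hR, integral_const_mul]
  rw [Measure.integral_comp_smul_of_nonneg μ _ R (hR := hR.le), smul_eq_mul, Real.rpow_add hR,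
    Real.rpow_natCast]
  field_simp

end Scaling

section Integrability

variable [FiniteDimensional ℝ E] [Nontrivial E] [MeasurableSpace E] [BorelSpace E]
  (μ : Measure E) [μ.IsAddHaarMeasure]

theorem integrable_min_norm_one_sq_div_norm_rpow {γ : ℝ} (hγ : γ ∈ Ioo (0 : ℝ) 2) :
    Integrable (fun y : E ↦ min ‖y‖ 1 ^ 2 / ‖y‖ ^ (finrank ℝ E + γ)) μ := by
  refine (integrable_fun_norm_addHaar μ
    (f := fun r : ℝ ↦ min r 1 ^ 2 / r ^ (finrank ℝ E + γ))).2 ?_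
  have polar {r : ℝ} (hr : 0 < r) (p : ℝ) :
      r ^ (finrank ℝ E - 1) • (r ^ p / r ^ (finrank ℝ E + γ)) = r ^ (p - 1 - γ) := by
    rw [smul_eq_mul, ← Real.rpow_natCast, Nat.cast_sub finrank_pos, Nat.cast_one,
      ← Real.rpow_sub hr, ← Real.rpow_add hr]
    ring_nf
  rw [← Ioc_union_Ioi_eq_Ioi (zero_le_one (α := ℝ))]
  refine IntegrableOn.union ?_ ?_
  · have near : IntegrableOn (fun r : ℝ ↦ r ^ (2 - 1 - γ)) (Ioc 0 1) := by
      rw [← intervalIntegrable_iff_integrableOn_Ioc_of_le zero_le_one]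
      exact intervalIntegral.intervalIntegrable_rpow' (by linarith [hγ.2])
    refine near.congr_fun (fun r hr ↦ ?_) measurableSet_Ioc
    dsimp only
    rw [min_eq_left hr.2, ← Real.rpow_two, polar hr.1]
  · have far : IntegrableOn (fun r : ℝ ↦ r ^ (0 - 1 - γ)) (Ioi 1) :=
      integrableOn_Ioi_rpow_of_lt (by linarith [hγ.1]) zero_lt_one
    refine far.congr_fun (fun r hr ↦ ?_) measurableSet_Ioi
    dsimp only
    rw [min_eq_right (le_of_lt hr), one_pow, ← polar (zero_lt_one.trans hr), Real.rpow_zero]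

theorem integrable_dissipationDensity_of_lipschitzWith {γ : ℝ} (hγ : γ ∈ Ioo (0 : ℝ) 2)
    {g : E → F} {L : ℝ≥0} (hL : LipschitzWith L g) {B : ℝ} (hB : ∀ z, ‖g z‖ ≤ B) (x : E) :
    Integrable (dissipationDensity γ g x) μ := by
  have hcont : Continuous g := hL.continuous
  have hmeas : AEStronglyMeasurable (dissipationDensity γ g x) μ := by
    refine Measurable.aestronglyMeasurable (.div (Continuous.measurable ?_) ?_)
    · fun_prop
    · exact measurable_norm.pow_const _
  have hincr (y : E) : ‖g x - g (x + y)‖ ≤ max (L : ℝ) (2 * B) * min ‖y‖ 1 := by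
    have hlip : ‖g x - g (x + y)‖ ≤ L * ‖y‖ := by simpa using hL.norm_sub_le x (x + y)
    have hbdd : ‖g x - g (x + y)‖ ≤ 2 * B := by
      linarith [norm_sub_le (g x) (g (x + y)), hB x, hB (x + y)]
    rw [mul_min_of_nonneg _ _ (L.coe_nonneg.trans (le_max_left _ _)), mul_one]
    exact le_min (hlip.trans (by gcongr; exact le_max_left _ _)) (hbdd.trans (le_max_right _ _))
  refine ((integrable_min_norm_one_sq_div_norm_rpow μ hγ).const_mul (max (L : ℝ) (2 * B) ^ 2)).mono'
    hmeas (.of_forall fun y ↦ ?_)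
  rw [Real.norm_of_nonneg (dissipationDensity_nonneg γ g x y), dissipationDensity,
    ← mul_div_assoc, ← mul_pow]
  gcongr
  exact hincr y

theorem integrable_dissipationDensity_fderiv_schwartzMap [NormedSpace ℝ F] {γ : ℝ}
    (hγ : γ ∈ Ioo (0 : ℝ) 2) (f : SchwartzMap E F) (x : E) :
    Integrable (dissipationDensity γ (fderiv ℝ f) x) μ := by
  let f' := SchwartzMap.fderivCLM ℝ E F f
  let f'' := SchwartzMap.fderivCLM ℝ E (E →L[ℝ] F) f'
  have hlip : LipschitzWith (SchwartzMap.seminorm ℝ 0 0 f'').toNNReal f' :=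
    lipschitzWith_of_nnnorm_fderiv_le f'.differentiable fun z ↦
      NNReal.coe_le_coe.1 ((f''.norm_le_seminorm ℝ z).trans (Real.le_coe_toNNReal _))
  exact integrable_dissipationDensity_of_lipschitzWith μ hγ hlip (f'.norm_le_seminorm ℝ) x

end Integrability

section Testing

variable [MeasurableSpace E] [BorelSpace E] {μ : Measure E} {φ : E → ℝ}

theorem integral_abs_mul_norm_sub_le_sqrt_mul_sqrt [IsFiniteMeasureOnCompacts μ] {γ : ℝ}
    (hγ : 0 < finrank ℝ E + γ) (hφ : Continuous φ) (hφc : HasCompactSupport φ) {g : E → F}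
    (hg : Continuous g) {x : E} (hD : Integrable (dissipationDensity γ g x) μ) :
    ∫ y, |φ y| * ‖g x - g (x + y)‖ ∂μ ≤
      √(∫ y, φ y ^ 2 * ‖y‖ ^ (finrank ℝ E + γ) ∂μ) * √(∫ y, dissipationDensity γ g x y ∂μ) := by
  have hw : Continuous fun y : E ↦ ‖y‖ ^ (finrank ℝ E + γ) :=
    continuous_norm.rpow_const fun _ ↦ .inr hγ.le
  have hφw : Integrable (fun y ↦ |φ y| ^ 2 * ‖y‖ ^ (finrank ℝ E + γ)) μ :=
    Continuous.integrable_of_hasCompactSupport (by fun_prop)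
      (hφc.comp_left (g := fun t : ℝ ↦ |t| ^ 2) (by simp)).mul_right
  have vanish (y : E) (hy : ‖y‖ ^ (finrank ℝ E + γ) = 0) : ‖g x - g (x + y)‖ = 0 := by
    rw [Real.rpow_eq_zero (norm_nonneg y) hγ.ne', norm_eq_zero] at hy
    simp [hy]
  simpa only [sq_abs, dissipationDensity] using
    integral_mul_le_sqrt_integral_sq_mul_mul_sqrt_integral_sq_div
    (fun y ↦ abs_nonneg (φ y)) (fun y ↦ norm_nonneg (g x - g (x + y)))
    (fun y ↦ Real.rpow_nonneg (norm_nonneg y) _) vanish hφ.abs.aestronglyMeasurable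
    (Continuous.aestronglyMeasurable (by fun_prop)) hw.aestronglyMeasurable hφw hD

variable [FiniteDimensional ℝ E] [μ.IsAddHaarMeasure] [NormedSpace ℝ F] [CompleteSpace F]
  {f : E → F}

theorem integral_smul_fderiv_apply_eq_sub (hφ : ContDiff ℝ 1 φ)
    (hφc : HasCompactSupport φ) (hf : ContDiff ℝ 1 f) (x v : E) :
    (∫ y, φ y ∂μ) • fderiv ℝ f x v =
      ∫ y, φ y • (fderiv ℝ f x - fderiv ℝ f (x + y)) v ∂μ -
        ∫ y, fderiv ℝ φ y v • f (x + y) ∂μ := by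
  have : Continuous (fderiv ℝ φ) := hφ.continuous_fderiv one_ne_zero
  have : Continuous (fderiv ℝ f) := hf.continuous_fderiv one_ne_zero
  have hφ₀ : Continuous φ := hφ.continuous
  have hf₀ : Continuous f := hf.continuous
  have hφ'f : Integrable (fun y ↦ fderiv ℝ φ y v • f (x + y)) μ :=
    Continuous.integrable_of_hasCompactSupport (by fun_prop)
      (hφc.fderiv_apply (𝕜 := ℝ) v).smul_right
  have hφf' : Integrable (fun y ↦ φ y • fderiv ℝ f (x + y) v) μ :=
    Continuous.integrable_of_hasCompactSupport (by fun_prop) hφc.smul_right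
  have hφf : Integrable (fun y ↦ φ y • f (x + y)) μ :=
    Continuous.integrable_of_hasCompactSupport (by fun_prop) hφc.smul_right
  have hφx : Integrable (fun y ↦ φ y • fderiv ℝ f x v) μ :=
    (hφ₀.integrable_of_hasCompactSupport hφc).smul_const _
  have parts : ∫ y, φ y • fderiv ℝ f (x + y) v ∂μ = -∫ y, fderiv ℝ φ y v • f (x + y) ∂μ := by
    have hd : Differentiable ℝ fun y ↦ f (x + y) :=
      (hf.differentiable one_ne_zero).comp (differentiable_id.const_add x)
    simpa only [fderiv_comp_add_left] using
      integral_smul_fderiv_eq_neg_fderiv_smul_of_integrable (g := fun y ↦ f (x + y)) hφ'f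
        (by simpa only [fderiv_comp_add_left] using hφf') hφf
        (fun y _ ↦ hφ.differentiable one_ne_zero y) (fun y _ ↦ hd y)
  simp only [sub_apply, smul_sub]
  rw [integral_sub hφx hφf', parts, integral_smul_const]
  abel

theorem norm_fderiv_mul_abs_integral_le (hφ : ContDiff ℝ 1 φ)
    (hφc : HasCompactSupport φ) (hf : ContDiff ℝ 1 f) {M : ℝ} (hM : ∀ z, ‖f z‖ ≤ M) (x : E) :
    ‖fderiv ℝ f x‖ * |∫ y, φ y ∂μ| ≤
      M * ∫ y, ‖fderiv ℝ φ y‖ ∂μ + ∫ y, |φ y| * ‖fderiv ℝ f x - fderiv ℝ f (x + y)‖ ∂μ := by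
  have hM₀ : 0 ≤ M := (norm_nonneg _).trans (hM 0)
  have hφ' : Continuous (fderiv ℝ φ) := hφ.continuous_fderiv one_ne_zero
  have : Continuous (fderiv ℝ f) := hf.continuous_fderiv one_ne_zero
  have hφ₀ : Continuous φ := hφ.continuous
  have hφ'int : Integrable (fun y ↦ ‖fderiv ℝ φ y‖) μ :=
    hφ'.norm.integrable_of_hasCompactSupport (hφc.fderiv (𝕜 := ℝ)).norm
  have hincr : Integrable (fun y ↦ |φ y| * ‖fderiv ℝ f x - fderiv ℝ f (x + y)‖) μ :=
    Continuous.integrable_of_hasCompactSupport (by fun_prop) hφc.norm.mul_right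
  rw [mul_comm, ← Real.norm_eq_abs, ← norm_smul]
  refine ContinuousLinearMap.opNorm_le_bound _ (by positivity) fun v ↦ ?_
  have hleft : ‖∫ y, φ y • (fderiv ℝ f x - fderiv ℝ f (x + y)) v ∂μ‖ ≤
      (∫ y, |φ y| * ‖fderiv ℝ f x - fderiv ℝ f (x + y)‖ ∂μ) * ‖v‖ := by
    rw [← integral_mul_const]
    refine norm_integral_le_of_norm_le (hincr.mul_const _) (.of_forall fun y ↦ ?_)
    rw [norm_smul, Real.norm_eq_abs, mul_assoc]
    gcongr
    exact ContinuousLinearMap.le_opNorm _ v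
  have hright : ‖∫ y, fderiv ℝ φ y v • f (x + y) ∂μ‖ ≤ M * (∫ y, ‖fderiv ℝ φ y‖ ∂μ) * ‖v‖ := by
    rw [← integral_const_mul, ← integral_mul_const]
    refine norm_integral_le_of_norm_le ((hφ'int.const_mul M).mul_const _) (.of_forall fun y ↦ ?_)
    rw [norm_smul, mul_comm M, mul_right_comm]
    gcongr
    · exact ContinuousLinearMap.le_opNorm _ v
    · exact hM _
  rw [smul_apply, integral_smul_fderiv_apply_eq_sub hφ hφc hf]
  linarith [norm_sub_le (∫ y, φ y • (fderiv ℝ f x - fderiv ℝ f (x + y)) v ∂μ)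
    (∫ y, fderiv ℝ φ y v • f (x + y) ∂μ)]

theorem rpow_norm_fderiv_mul_abs_integral_le {γ : ℝ} (hγ : 0 < γ)
    (hφ : ContDiff ℝ 1 φ) (hφc : HasCompactSupport φ) (hf : ContDiff ℝ 1 f) {M : ℝ}
    (hM : ∀ z, ‖f z‖ ≤ M) {x : E} (hD : Integrable (dissipationDensity γ (fderiv ℝ f) x) μ) :
    (‖fderiv ℝ f x‖ * |∫ y, φ y ∂μ|) ^ (2 + γ) ≤
      2 ^ (2 + γ) * (M * ∫ y, ‖fderiv ℝ φ y‖ ∂μ) ^ γ *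
        ((∫ y, φ y ^ 2 * ‖y‖ ^ (finrank ℝ E + γ) ∂μ) *
          ∫ y, dissipationDensity γ (fderiv ℝ f) x y ∂μ) := by
  have hM₀ : 0 ≤ M := (norm_nonneg _).trans (hM 0)
  have hD₀ : 0 ≤ ∫ y, dissipationDensity γ (fderiv ℝ f) x y ∂μ :=
    integral_nonneg (dissipationDensity_nonneg γ _ x)
  refine rpow_le_of_forall_mul_le_add_sqrt (by positivity) (by positivity) (by positivity) hγ.le
    fun R hR ↦ ?_
  have hx : R • R⁻¹ • x = x := smul_inv_smul₀ hR.ne' x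
  have hfR : ContDiff ℝ 1 fun z ↦ f (R • z) := hf.comp (contDiff_const_smul R)
  have hDR := integrable_dissipationDensity_fderiv_comp_smul hR (hx.symm ▸ hD)
  have htest := norm_fderiv_mul_abs_integral_le (μ := μ) hφ hφc hfR (fun z ↦ hM (R • z)) (R⁻¹ • x)
  have hCS := integral_abs_mul_norm_sub_le_sqrt_mul_sqrt (by positivity) hφ.continuous hφc
    (hfR.continuous_fderiv one_ne_zero) hDR
  rw [integral_dissipationDensity_fderiv_comp_smul hR, hx, ← Real.sqrt_mul (by positivity)] at hCS
  calc ‖fderiv ℝ f x‖ * |∫ y, φ y ∂μ| * R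
      = ‖fderiv ℝ (fun z ↦ f (R • z)) (R⁻¹ • x)‖ * |∫ y, φ y ∂μ| := by
        rw [fderiv_comp_smul, hx, norm_smul, Real.norm_of_nonneg hR.le]
        ring
    _ ≤ _ := htest.trans (add_le_add_right hCS _)
    _ = _ := by ring_nf

end Testing

theorem constantin_vicol_linfty_lower_bound_general {E : Type*} [NormedAddCommGroup E]
    [NormedSpace ℝ E] [FiniteDimensional ℝ E] [MeasurableSpace E] [BorelSpace E] (μ : Measure E)
    [μ.IsAddHaarMeasure] {γ : ℝ} (hγ : 0 < γ) :
    ∃ C > (0 : ℝ), ∀ {F : Type*} [NormedAddCommGroup F] [NormedSpace ℝ F] [CompleteSpace F]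
      {f : E → F} {M : ℝ} {x : E}, ContDiff ℝ 1 f → (∀ z, ‖f z‖ ≤ M) →
      Integrable (dissipationDensity γ (fderiv ℝ f) x) μ →
      ‖fderiv ℝ f x‖ ^ (2 + γ) ≤
        C * M ^ γ * ∫ y, dissipationDensity γ (fderiv ℝ f) x y ∂μ := by
  let φ : ContDiffBump (0 : E) := ⟨1, 2, zero_lt_one, one_lt_two⟩
  let c₀ := ∫ y, φ y ∂μ
  let c₁ := ∫ y, ‖fderiv ℝ φ y‖ ∂μ
  let c₂ := ∫ y, φ y ^ 2 * ‖y‖ ^ (finrank ℝ E + γ) ∂μ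
  have hc₀ : 0 < c₀ := φ.integral_pos
  have hc₁ : 0 ≤ c₁ := by positivity
  have : 0 ≤ c₂ := by positivity
  -- In dimension zero `c₁ = c₂ = 0`; adding `1` keeps the constant positive there.
  refine ⟨2 ^ (2 + γ) * c₁ ^ γ * c₂ / c₀ ^ (2 + γ) + 1, by positivity, ?_⟩
  intro F _ _ _ f M x hf hM hD
  have hM₀ : 0 ≤ M := (norm_nonneg _).trans (hM 0)
  have hD₀ : 0 ≤ ∫ y, dissipationDensity γ (fderiv ℝ f) x y ∂μ :=
    integral_nonneg (dissipationDensity_nonneg γ _ x)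
  have key := rpow_norm_fderiv_mul_abs_integral_le hγ φ.contDiff φ.hasCompactSupport hf hM hD
  rw [abs_of_pos hc₀, Real.mul_rpow (norm_nonneg _) hc₀.le, Real.mul_rpow hM₀ hc₁,
    ← le_div_iff₀ (by positivity)] at key
  calc ‖fderiv ℝ f x‖ ^ (2 + γ)
      ≤ 2 ^ (2 + γ) * c₁ ^ γ * c₂ / c₀ ^ (2 + γ) * M ^ γ *
          ∫ y, dissipationDensity γ (fderiv ℝ f) x y ∂μ := key.trans_eq (by ring)
    _ ≤ _ := by gcongr; exact le_add_of_nonneg_right zero_le_one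

section Gradient

variable {𝕜 H : Type*} [RCLike 𝕜] [NormedAddCommGroup H] [InnerProductSpace 𝕜 H] [CompleteSpace H]

theorem norm_gradient (f : H → 𝕜) (x : H) : ‖gradient f x‖ = ‖fderiv 𝕜 f x‖ :=
  LinearIsometryEquiv.norm_map _ _

theorem norm_gradient_sub_gradient (f : H → 𝕜) (x y : H) :
    ‖gradient f x - gradient f y‖ = ‖fderiv 𝕜 f x - fderiv 𝕜 f y‖ := by
  rw [gradient, gradient, ← map_sub, LinearIsometryEquiv.norm_map]

end Gradient

/-- Constantin–Vicol nonlinear maximum principle lower bound: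
`D_γ(∇f)(x) ≥ |∇f(x)|^{2+γ} / (C ‖f‖_∞^γ)`. -/
theorem constantin_vicol_linfty_lower_bound (n : ℕ) (hn : 1 ≤ n) (γ : ℝ)
    (hγ : γ ∈ Set.Ioo (0 : ℝ) 2) :
    ∃ C > (0 : ℝ), ∀ (f : SchwartzMap (EuclideanSpace ℝ (Fin n)) ℝ)
      (x : EuclideanSpace ℝ (Fin n)),
      C * (⨆ z : EuclideanSpace ℝ (Fin n), |f z|) ^ γ *
          ∫ y : EuclideanSpace ℝ (Fin n),
            ‖gradient (⇑f) x - gradient (⇑f) (x + y)‖ ^ 2 / ‖y‖ ^ ((n : ℝ) + γ) ≥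
        ‖gradient (⇑f) x‖ ^ (2 + γ) := by
  have : NeZero n := ⟨Nat.one_le_iff_ne_zero.1 hn⟩
  obtain ⟨C, hC, hbound⟩ := constantin_vicol_linfty_lower_bound_general
    (volume : Measure (EuclideanSpace ℝ (Fin n))) hγ.1
  refine ⟨C, hC, fun f x ↦ ?_⟩
  have hM (z : EuclideanSpace ℝ (Fin n)) : ‖f z‖ ≤ ⨆ z, |f z| :=
    le_ciSup (f := fun z ↦ |f z|) ⟨_, forall_mem_range.2 (f.norm_le_seminorm ℝ)⟩ z
  have h := hbound (f.smooth 1) hM (integrable_dissipationDensity_fderiv_schwartzMap volume hγ f x)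
  simpa only [dissipationDensity, finrank_euclideanSpace_fin, norm_gradient_sub_gradient,
    norm_gradient, ge_iff_le] using h
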